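/- Let n ≥ 1 and 0 ≤ k ≤ n − 1 be integers, and let S = { S ⊆ [n] : |S| ≥ n − k } be the family of all subsets of [n] missing at most k coordinates. Then HHdim(S) = k + 1. -/

import Mathlib

/-- The support of a vector `v`: the set of its non-zero coordinates. -/
def vecSupp {α : Type*} (v : α → ℝ) : Set α := {i | v i ≠ 0}

/-- The set of heavy hitters of `v` induced by the set system `S`:
indices `i` such that some member `s ∈ S` satisfies `supp(v) ∩ s = {i}`. -/
def HHset {α : Type*} (S : Set (Set α)) (v : α → ℝ) : Set α :=
  {i | ∃ s ∈ S, vecSupp v ∩ s = {i}}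

/-- The heavy-hitter dimension of a set system: the supremum over vectors `v`
of the number of heavy hitters induced by `S`. -/
noncomputable def HHdim {α : Type*} (S : Set (Set α)) : ℕ :=
  sSup {k | ∃ v : α → ℝ, (HHset S v).ncard = k}

/-!
If `supp v ∩ s = {i}`, then `supp v` is covered by `sᶜ ∪ {i}`, so a single heavy hitter isolated by
a set missing at most `k` coordinates already forces `|supp v| ≤ k + 1`. Conversely, if
`|supp v| ≤ k + 1`, then every `i ∈ supp v` is isolated by `(supp v)ᶜ ∪ {i}`, which misses only the
at most `k` other coordinates of `supp v`. Counting missing coordinates instead of present ones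
makes the argument independent of the size of the ground set, which may be infinite.
-/

section HeavyHitters

variable {α : Type*}

theorem HHset_subset_vecSupp (S : Set (Set α)) (v : α → ℝ) : HHset S v ⊆ vecSupp v := by
  rintro i ⟨s, -, hs⟩
  exact (hs.superset rfl).1

theorem vecSupp_indicator_one (T : Set α) : vecSupp (T.indicator 1) = T := by
  ext i
  simp [vecSupp]

theorem encard_vecSupp_le_of_HHset_nonempty {S : Set (Set α)} {v : α → ℝ} {k : ℕ∞}
    (hS : ∀ s ∈ S, sᶜ.encard ≤ k) (hv : (HHset S v).Nonempty) : (vecSupp v).encard ≤ k + 1 := by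
  obtain ⟨i, s, hs, hi⟩ := hv
  have hcover : vecSupp v ⊆ insert i sᶜ := by
    rw [Set.insert_eq, ← hi]
    intro j hj
    by_cases hjs : j ∈ s
    · exact Or.inl ⟨hj, hjs⟩
    · exact Or.inr hjs
  calc (vecSupp v).encard ≤ (insert i sᶜ).encard := Set.encard_le_encard hcover
    _ ≤ sᶜ.encard + 1 := Set.encard_insert_le _ _
    _ ≤ k + 1 := by gcongr; exact hS s hs

theorem encard_HHset_le {S : Set (Set α)} {k : ℕ∞} (hS : ∀ s ∈ S, sᶜ.encard ≤ k) (v : α → ℝ) :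
    (HHset S v).encard ≤ k + 1 := by
  rcases (HHset S v).eq_empty_or_nonempty with hempty | hne
  · simp [hempty]
  · exact (Set.encard_le_encard (HHset_subset_vecSupp S v)).trans
      (encard_vecSupp_le_of_HHset_nonempty hS hne)

theorem HHset_eq_vecSupp_of_insert_compl_mem {S : Set (Set α)} {v : α → ℝ}
    (hS : ∀ i ∈ vecSupp v, insert i (vecSupp v)ᶜ ∈ S) : HHset S v = vecSupp v := by
  refine (HHset_subset_vecSupp S v).antisymm fun i hi => ⟨_, hS i hi, ?_⟩
  rw [Set.inter_insert_of_mem hi, Set.inter_compl_self, insert_empty_eq]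

theorem HHset_eq_vecSupp_of_encard_vecSupp_le {v : α → ℝ} {k : ℕ∞}
    (hv : (vecSupp v).encard ≤ k + 1) : HHset {s | sᶜ.encard ≤ k} v = vecSupp v := by
  refine HHset_eq_vecSupp_of_insert_compl_mem fun i hi => ?_
  have hcompl : (insert i (vecSupp v)ᶜ)ᶜ = vecSupp v \ {i} := by
    rw [Set.insert_eq, Set.compl_union, compl_compl, Set.inter_comm, Set.sdiff_eq]
  rw [Set.mem_ofPred_eq, hcompl, Set.encard_sdiff_singleton_of_mem hi]
  exact tsub_le_iff_right.mpr hv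

theorem HHdim_sets_missing_few_general (α : Type*) (k : ℕ) :
    (HHdim {s : Set α | sᶜ.encard ≤ k} : ℕ∞) = min (k + 1 : ℕ∞) (ENat.card α) := by
  obtain ⟨T, -, hT⟩ : ∃ T ⊆ (Set.univ : Set α), T.encard = min (k + 1 : ℕ∞) (ENat.card α) :=
    Set.exists_subset_encard_eq (by rw [Set.encard_univ]; exact min_le_right _ _)
  have hTk : T.encard ≤ k + 1 := hT.trans_le (min_le_left _ _)
  have hTfin : T.Finite := Set.finite_of_encard_le_coe (k := k + 1) (mod_cast hTk)
  have hgreatest :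
      IsGreatest {m | ∃ v : α → ℝ, (HHset {s | sᶜ.encard ≤ k} v).ncard = m} T.ncard := by
    constructor
    · refine ⟨T.indicator 1, ?_⟩
      rw [HHset_eq_vecSupp_of_encard_vecSupp_le (by rwa [vecSupp_indicator_one]),
        vecSupp_indicator_one]
    · rintro _ ⟨v, rfl⟩
      refine ENat.toNat_le_toNat ?_ hTfin.encard_lt_top.ne
      rw [hT]
      exact le_min (encard_HHset_le (fun _ hs => hs) v) Set.encard_le_card
  rw [← hT, ← hTfin.cast_ncard_eq]
  exact congrArg _ hgreatest.csSup_eq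

end HeavyHitters

theorem setOf_card_sub_le_ncard_eq (α : Type*) [Finite α] (k : ℕ) :
    {s : Set α | Nat.card α - k ≤ s.ncard} = {s | sᶜ.encard ≤ (k : ℕ∞)} := by
  ext s
  rw [Set.mem_ofPred_eq, Set.mem_ofPred_eq, ← sᶜ.toFinite.cast_ncard_eq, Nat.cast_le,
    ← Set.ncard_add_ncard_compl s]
  omega

/-- For `1 ≤ n` and `0 ≤ k ≤ n - 1`, the family of all subsets of
`[n]` of size at least `n - k` (i.e. missing at most `k` coordinates) has
heavy-hitter dimension exactly `k + 1`. -/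
theorem HHdim_sets_missing_few {n k : ℕ} (hn : 1 ≤ n) (hk : k ≤ n - 1) :
    HHdim {s : Set (Fin n) | n - k ≤ s.ncard} = k + 1 := by
  have hdim := HHdim_sets_missing_few_general (Fin n) k
  rw [← setOf_card_sub_le_ncard_eq, ENat.card_eq_coe_natCard, Nat.card_fin,
    min_eq_left (mod_cast (by omega : k + 1 ≤ n))] at hdim
  exact_mod_cast hdim
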